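/- arXiv:1107.0124 — 2 statements merged into one kernel-verified Lean document; each statement's English description precedes it below -/
import Mathlib

section
/- (Berger–Wang formula.) Let d ≥ 1 and let {S_i}_{i∈I} be a family of d×d complex matrices, indexed by an arbitrary nonempty set I, which is bounded in norm. Then ρ(S) = ρ̂(S), i.e. limsup_{n→∞} sup_{w∈I^n} ρ(S_w)^{1/n} = limsup_{n→∞} sup_{w∈I^n} ‖S_w‖^{1/n}. -/
open Filter Topology MeasureTheory

/-- Operator norm on `d × d` complex matrices induced by the Euclidean norm on `ℂ^d`. -/
noncomputable def opNorm {d : ℕ} (A : Matrix (Fin d) (Fin d) ℂ) : ℝ :=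
  ‖Matrix.toEuclideanCLM (𝕜 := ℂ) A‖

/-- Spectral radius of a complex matrix, as a real number. -/
noncomputable def specRad {d : ℕ} (A : Matrix (Fin d) (Fin d) ℂ) : ℝ :=
  (spectralRadius ℂ A).toReal

/-- `prodS S x n = S_{i_n} ⋯ S_{i_1}` where `i_k = x (k-1)`. -/
noncomputable def prodS {d : ℕ} {I : Type*} (S : I → Matrix (Fin d) (Fin d) ℂ)
    (x : ℕ → I) : ℕ → Matrix (Fin d) (Fin d) ℂ
  | 0 => 1
  | n + 1 => S (x n) * prodS S x n

/-!
Scaling reduces the nontrivial inequality to the claim that a bounded set `s` of generalized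
spectral radius at most `1` has joint spectral radius at most `1`, and we may replace the matrix
algebra by the algebra `A` generated by `s`. Every product of elements of `s` has spectral radius
at most `1`, so its trace in the regular representation is at most `dim A`. The radical of the
trace form `(a, b) ↦ tr (a b)` lies in the Jacobson radical `J`, and the products span `A`, hence
bounded traces force all products to lie within a fixed distance `C` of `J`. Since `J` is
nilpotent, in a product of `m` elements of `s ^ n` only boundedly many factors can contribute
their `J`-part, so its norm is `O((C + 1) ^ m)`. Thus the `n`-th power of the joint spectral radius
is at most `C + 1` for every `n`.
-/

open Module
open scoped ENNReal NNReal Pointwise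

/-! ### The trace form of the regular representation -/

section TraceForm

open Polynomial

variable {K A : Type*} [Field K] [Ring A] [Algebra K A]

/-- The trace of left multiplication by an element of an algebra; the counterpart of
`Algebra.trace` for algebras that need not be commutative. -/
noncomputable def regularTrace (K A : Type*) [Field K] [Ring A] [Algebra K A] : A →ₗ[K] K :=
  LinearMap.trace K A ∘ₗ (Algebra.lmul K A).toLinearMap

/-- The idempotent is the Fitting projection of `a`: the identity on the part where `a` is
invertible and zero on the part where `a` is nilpotent. -/
lemma exists_isIdempotentElem_aeval_mul {a : A} (ha : IsIntegral K a) :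
    ∃ (p : K[X]) (k : ℕ), IsIdempotentElem (aeval a p * a) ∧ a ^ k * (aeval a p * a) = a ^ k := by
  obtain ⟨q, hq, hXq⟩ := (minpoly K a).exists_eq_pow_rootMultiplicity_mul_and_not_dvd
    (minpoly.ne_zero ha) 0
  set k := (minpoly K a).rootMultiplicity 0
  rw [map_zero, sub_zero] at hq hXq
  obtain ⟨u, v, huv⟩ : IsCoprime (X ^ (k + 1)) q :=
    ((irreducible_X.coprime_iff_not_dvd).2 hXq).pow_left
  have aeval_eq_zero (w : K[X]) : aeval a (w * (X ^ k * q)) = 0 := by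
    rw [map_mul, ← hq, minpoly.aeval, mul_zero]
  have he : aeval a (u * X ^ k) * a = aeval a (u * X ^ (k + 1)) := by
    rw [pow_succ, ← mul_assoc, map_mul _ (u * X ^ k) X, aeval_X]
  refine ⟨u * X ^ k, k, ?_, ?_⟩
  · rw [he, IsIdempotentElem, ← map_mul, ← sub_eq_zero, ← map_sub]
    convert aeval_eq_zero (-(u * X * v)) using 2
    linear_combination u * X ^ (k + 1) * huv
  · rw [he, ← sub_eq_zero, ← aeval_X_pow (R := K) a, ← map_mul, ← map_sub]
    convert aeval_eq_zero (-v) using 2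
    linear_combination X ^ k * huv

lemma eq_zero_of_isIdempotentElem_of_regularTrace_eq_zero [CharZero K] [FiniteDimensional K A]
    {e : A} (he : IsIdempotentElem e) (htr : regularTrace K A e = 0) : e = 0 :=
  (map_eq_zero_iff (Algebra.lmul K A) Algebra.lmul_injective).1 <|
    LinearMap.IsIdempotentElem.eq_zero_of_trace_eq_zero (he.map (Algebra.lmul K A)) htr

lemma isNilpotent_of_regularTrace_mul_eq_zero [CharZero K] [FiniteDimensional K A] {a : A}
    (ha : ∀ c, regularTrace K A (c * a) = 0) : IsNilpotent a := by
  obtain ⟨p, k, hidem, hpow⟩ := exists_isIdempotentElem_aeval_mul (IsIntegral.of_finite K a)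
  have hzero := eq_zero_of_isIdempotentElem_of_regularTrace_eq_zero hidem (ha _)
  exact ⟨k, by rw [← hpow, hzero, mul_zero]⟩

lemma mem_jacobson_bot_of_regularTrace_mul_eq_zero [CharZero K] [FiniteDimensional K A] {a : A}
    (ha : ∀ c, regularTrace K A (c * a) = 0) : a ∈ Ideal.jacobson (⊥ : Ideal A) := by
  refine Ideal.mem_jacobson_iff.2 fun y => ?_
  have hnil : IsNilpotent (y * a) :=
    isNilpotent_of_regularTrace_mul_eq_zero (K := K) fun c => by rw [← mul_assoc]; exact ha _
  obtain ⟨z, hz⟩ := hnil.isUnit_add_one.exists_left_inv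
  refine ⟨z, ?_⟩
  rw [mul_assoc, ← mul_add_one, hz, sub_self]
  exact zero_mem _

end TraceForm

lemma enorm_trace_le {K V : Type*} [NormedField K] [IsAlgClosed K] [AddCommGroup V] [Module K V]
    [FiniteDimensional K V] (f : End K V) :
    ‖LinearMap.trace K V f‖ₑ ≤ finrank K V * spectralRadius K f := by
  rw [End.trace_eq_sum_roots_charpoly_of_splits (IsAlgClosed.splits _)]
  have hroot (z : K) (hz : z ∈ f.charpoly.roots) : ‖z‖ₑ ≤ spectralRadius K f :=
    have hspec : z ∈ spectrum K f :=
      (End.mem_spectrum_iff_isRoot_charpoly f z).2 (Polynomial.isRoot_of_mem_roots hz)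
    le_iSup₂_of_le z hspec le_rfl
  calc ‖f.charpoly.roots.sum‖ₑ ≤ (f.charpoly.roots.map (‖·‖ₑ)).sum := enorm_multisetSum_le _
    _ ≤ f.charpoly.roots.card * spectralRadius K f := by
        simpa only [Multiset.card_map, nsmul_eq_mul] using
          Multiset.sum_le_card_nsmul _ _ (Multiset.forall_mem_map_iff.2 hroot)
    _ ≤ finrank K V * spectralRadius K f := by
        gcongr
        exact (Polynomial.card_roots' _).trans_eq f.charpoly_natDegree

lemma spectralRadius_map_le {𝕜 A B : Type*} [NormedField 𝕜] [Ring A] [Algebra 𝕜 A] [Ring B]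
    [Algebra 𝕜 B] (φ : A →ₐ[𝕜] B) (a : A) : spectralRadius 𝕜 (φ a) ≤ spectralRadius 𝕜 a :=
  biSup_mono fun _ hk => AlgHom.spectrum_apply_subset φ a hk

lemma enorm_regularTrace_le {K A : Type*} [NormedField K] [IsAlgClosed K] [Ring A] [Algebra K A]
    [FiniteDimensional K A] (a : A) :
    ‖regularTrace K A a‖ₑ ≤ finrank K A * spectralRadius K a :=
  (enorm_trace_le _).trans (by gcongr; exact spectralRadius_map_le (Algebra.lmul K A) a)

section SpectralRadius

lemma spectralRadius_smul {𝕜 A : Type*} [NormedField 𝕜] [Ring A] [Algebra 𝕜 A] {c : 𝕜}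
    (hc : c ≠ 0) (a : A) : spectralRadius 𝕜 (c • a) = ‖c‖ₑ * spectralRadius 𝕜 a := by
  have hspec : spectrum 𝕜 (c • a) = (c * ·) '' spectrum 𝕜 a :=
    spectrum.unit_smul_eq_smul a (Units.mk0 c hc)
  simp_rw [spectralRadius, hspec, iSup_image, ENNReal.mul_iSup, ← enorm_eq_nnnorm, enorm_mul]

variable {A B : Type*} [NormedRing A] [NormedAlgebra ℂ A] [CompleteSpace A]
  [NormedRing B] [NormedAlgebra ℂ B] [CompleteSpace B]

lemma spectralRadius_le_enorm (a : A) : spectralRadius ℂ a ≤ ‖a‖ₑ := by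
  refine le_of_tendsto (spectrum.gelfand_formula a) ?_
  filter_upwards [eventually_gt_atTop 0] with n hn
  rw [one_div, ENNReal.rpow_inv_le_iff (by positivity), ENNReal.rpow_natCast, enorm_eq_nnnorm]
  exact_mod_cast nnnorm_pow_le' a hn

lemma spectralRadius_map_of_isometry (φ : A →ₐ[ℂ] B) (hφ : Isometry φ) (a : A) :
    spectralRadius ℂ (φ a) = spectralRadius ℂ a := by
  refine tendsto_nhds_unique (spectrum.gelfand_formula (φ a)) ?_
  simpa only [← map_pow, hφ.nnnorm_map_of_map_zero (map_zero φ)] using spectrum.gelfand_formula a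

end SpectralRadius

/-! ### Products whose factors are bounded modulo a nilpotent ideal -/

section Growth

variable {A : Type*} [NormedRing A]

lemma nnnorm_le_of_mem_pow {s : Set A} {R : ℝ≥0} (hs : ∀ a ∈ s, ‖a‖₊ ≤ R) {n : ℕ} {a : A}
    (ha : a ∈ s ^ n) : ‖a‖₊ ≤ ‖(1 : A)‖₊ * R ^ n := by
  induction n generalizing a with
  | zero => simp_all
  | succ n ih =>
    rw [pow_succ] at ha
    obtain ⟨b, hb, c, hc, rfl⟩ := ha
    calc ‖b * c‖₊ ≤ ‖b‖₊ * ‖c‖₊ := nnnorm_mul_le b c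
      _ ≤ ‖(1 : A)‖₊ * R ^ n * R := mul_le_mul' (ih hb) (hs c hc)
      _ = ‖(1 : A)‖₊ * R ^ (n + 1) := by rw [pow_succ, mul_assoc]

/-- Each factor `x = b + (x - b)` either contributes the bounded part `b` or climbs one step in
the filtration `J ^ j`, which can happen at most `i` times. -/
lemma nnnorm_mul_le_of_mem_ideal_pow {J : Ideal A} [J.IsTwoSided] {X : Set A} {C K : ℝ≥0}
    (hK : 1 ≤ K) (hX : ∀ x ∈ X, ∃ b, ‖b‖₊ ≤ C ∧ x - b ∈ J ∧ ‖x - b‖₊ ≤ K) {m i j : ℕ}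
    (hJ : J ^ (j + i) = ⊥) {y p : A} (hy : y ∈ J ^ j) (hp : p ∈ X ^ m) :
    ‖y * p‖₊ ≤ ‖y‖₊ * (K ^ i * (C + 1) ^ m) := by
  induction m generalizing i j y p with
  | zero =>
    obtain rfl : p = 1 := by simpa using hp
    simpa using le_mul_of_one_le_right' (a := ‖y‖₊) (one_le_pow₀ hK)
  | succ m ih =>
    cases i with
    | zero =>
      obtain rfl : y = 0 := by simpa [show J ^ j = ⊥ from hJ] using hy
      simp
    | succ i =>
      rw [pow_succ'] at hp
      obtain ⟨x, hx, q, hq, rfl⟩ := hp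
      obtain ⟨b, hbC, hbJ, hbK⟩ := hX x hx
      have bounded_part : ‖y * b * q‖₊ ≤ ‖y * b‖₊ * (K ^ (i + 1) * (C + 1) ^ m) :=
        ih hJ (Ideal.mul_mem_right b _ hy) hq
      have ideal_part : ‖y * (x - b) * q‖₊ ≤ ‖y * (x - b)‖₊ * (K ^ i * (C + 1) ^ m) :=
        ih (j := j + 1) (by rwa [add_right_comm]) (Ideal.mul_mem_mul hy hbJ) hq
      calc ‖y * (x * q)‖₊ = ‖y * b * q + y * (x - b) * q‖₊ := by congr 1; noncomm_ring
        _ ≤ ‖y * b * q‖₊ + ‖y * (x - b) * q‖₊ := nnnorm_add_le _ _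
        _ ≤ ‖y‖₊ * C * (K ^ (i + 1) * (C + 1) ^ m) + ‖y‖₊ * K * (K ^ i * (C + 1) ^ m) := by
          grw [bounded_part, ideal_part, nnnorm_mul_le y b, nnnorm_mul_le y (x - b), hbC, hbK]
        _ = ‖y‖₊ * (K ^ (i + 1) * (C + 1) ^ (m + 1)) := by ring

lemma nnnorm_le_of_mem_pow_of_ideal_pow_eq_bot {J : Ideal A} [J.IsTwoSided] {k : ℕ}
    (hJ : J ^ k = ⊥) {X : Set A} {C K : ℝ≥0} (hK : 1 ≤ K)
    (hX : ∀ x ∈ X, ∃ b, ‖b‖₊ ≤ C ∧ x - b ∈ J ∧ ‖x - b‖₊ ≤ K) {m : ℕ} {p : A} (hp : p ∈ X ^ m) :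
    ‖p‖₊ ≤ ‖(1 : A)‖₊ * (K ^ k * (C + 1) ^ m) := by
  have hone : (1 : A) ∈ J ^ 0 := Submodule.one_le.1 le_rfl
  simpa using nnnorm_mul_le_of_mem_ideal_pow hK hX (by rwa [zero_add]) hone hp

lemma exists_nnnorm_le_mul_pow_of_pow {s : Set A} {R K t : ℝ≥0} {n : ℕ} (hn : n ≠ 0) (ht : 1 ≤ t)
    (hs : ∀ a ∈ s, ‖a‖₊ ≤ R) (hsn : ∀ m, ∀ a ∈ (s ^ n) ^ m, ‖a‖₊ ≤ K * (t ^ n) ^ m) :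
    ∃ D : ℝ≥0, ∀ N, ∀ a ∈ s ^ N, ‖a‖₊ ≤ D * t ^ N := by
  refine ⟨K * (‖(1 : A)‖₊ * max R 1 ^ n), fun N a ha => ?_⟩
  rw [← Nat.div_add_mod N n, pow_add, pow_mul] at ha
  obtain ⟨b, hb, c, hc, rfl⟩ := ha
  have hb' : ‖b‖₊ ≤ K * t ^ N := calc
    ‖b‖₊ ≤ K * (t ^ n) ^ (N / n) := hsn _ b hb
    _ = K * t ^ (n * (N / n)) := by rw [pow_mul]
    _ ≤ K * t ^ N := by gcongr; exact Nat.mul_div_le N n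
  have hc' : ‖c‖₊ ≤ ‖(1 : A)‖₊ * max R 1 ^ n := calc
    ‖c‖₊ ≤ ‖(1 : A)‖₊ * max R 1 ^ (N % n) :=
      nnnorm_le_of_mem_pow (fun a ha => le_max_of_le_left (hs a ha)) hc
    _ ≤ ‖(1 : A)‖₊ * max R 1 ^ n := by
      gcongr; exacts [le_max_right R 1, (Nat.mod_lt N hn.bot_lt).le]
  calc ‖b * c‖₊ ≤ ‖b‖₊ * ‖c‖₊ := nnnorm_mul_le b c
    _ ≤ K * t ^ N * (‖(1 : A)‖₊ * max R 1 ^ n) := mul_le_mul' hb' hc'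
    _ = K * (‖(1 : A)‖₊ * max R 1 ^ n) * t ^ N := mul_right_comm _ _ _

end Growth

/-! ### Growth rates along products -/

section GrowthRate

/-- The exponential growth rate `limsup_n sup_{a ∈ s ^ n} f(a) ^ (1 / n)` of `f` along the products
of elements of `s`. It specializes to the joint spectral radius and to the generalized spectral
radius. Taking values in `ℝ≥0∞` makes all suprema and upper limits exist. -/
noncomputable def growthRate {M : Type*} [Monoid M] (f : M → ℝ≥0∞) (s : Set M) : ℝ≥0∞ :=
  limsup (fun n : ℕ => ⨆ a ∈ s ^ n, f a ^ (1 / (n : ℝ))) atTop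

/-- The joint spectral radius of a set in a normed ring: the growth rate of the norm. -/
noncomputable def jointSpectralRadius {A : Type*} [NormedRing A] (s : Set A) : ℝ≥0∞ :=
  growthRate (‖·‖ₑ) s

/-- The generalized spectral radius of a set in an algebra over a normed field: the growth rate of
the spectral radius. -/
noncomputable def generalizedSpectralRadius (𝕜 : Type*) {A : Type*} [NormedField 𝕜] [Ring A]
    [Algebra 𝕜 A] (s : Set A) : ℝ≥0∞ :=
  growthRate (spectralRadius 𝕜) s

lemma growthRate_mono {M : Type*} [Monoid M] {f g : M → ℝ≥0∞} (hfg : ∀ a, f a ≤ g a) (s : Set M) :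
    growthRate f s ≤ growthRate g s :=
  limsup_le_limsup <| .of_forall fun n =>
    iSup₂_mono fun a _ => ENNReal.rpow_le_rpow (hfg a) (by positivity)

lemma growthRate_image {F M N : Type*} [Monoid M] [Monoid N] [FunLike F M N]
    [MonoidHomClass F M N] (f : N → ℝ≥0∞) (φ : F) (s : Set M) :
    growthRate f (φ '' s) = growthRate (f ∘ φ) s := by
  simp_rw [growthRate, ← Set.image_pow, iSup_image, Function.comp_apply]

lemma growthRate_smul {𝕜 A : Type*} [NormedField 𝕜] [Ring A] [Algebra 𝕜 A] {f : A → ℝ≥0∞}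
    {c : 𝕜} (hf : ∀ n a, f (c ^ n • a) = ‖c ^ n‖ₑ * f a) (s : Set A) :
    growthRate f (c • s) = ‖c‖ₑ * growthRate f s := by
  rw [growthRate, growthRate, ← ENNReal.limsup_const_mul_of_ne_top enorm_ne_top]
  refine limsup_congr ?_
  filter_upwards [eventually_ne_atTop 0] with n hn
  have hroot (a : A) : f (c ^ n • a) ^ (1 / (n : ℝ)) = ‖c‖ₑ * f a ^ (1 / (n : ℝ)) := by
    rw [hf, ENNReal.mul_rpow_of_nonneg _ _ (by positivity), enorm_pow, one_div,
      ENNReal.pow_rpow_inv_natCast hn]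
  simp_rw [smul_pow, ← Set.image_smul, iSup_image, hroot, ENNReal.mul_iSup]

lemma eventually_iSup_rpow_one_div_le {M : Type*} [Monoid M] {f : M → ℝ≥0∞} {s : Set M}
    {D t ε : ℝ≥0∞} (hD : D ≠ ∞) (hf : ∀ n, ∀ a ∈ s ^ n, f a ≤ D * t ^ n) (hε : 1 < ε) :
    ∀ᶠ n : ℕ in atTop, ⨆ a ∈ s ^ n, f a ^ (1 / (n : ℝ)) ≤ ε * t := by
  filter_upwards [ENNReal.eventually_pow_one_div_le hD hε, eventually_ne_atTop 0] with n hDn hn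
  refine iSup₂_le fun a ha => ?_
  calc f a ^ (1 / (n : ℝ)) ≤ (D * t ^ n) ^ (1 / (n : ℝ)) :=
        ENNReal.rpow_le_rpow (hf n a ha) (by positivity)
    _ = D ^ (1 / (n : ℝ)) * t := by
        rw [ENNReal.mul_rpow_of_nonneg _ _ (by positivity), one_div,
          ENNReal.pow_rpow_inv_natCast hn]
    _ ≤ ε * t := by gcongr

lemma growthRate_le_of_forall_le_mul_pow {M : Type*} [Monoid M] {f : M → ℝ≥0∞} {s : Set M}
    {D t : ℝ≥0∞} (hD : D ≠ ∞) (hf : ∀ n, ∀ a ∈ s ^ n, f a ≤ D * t ^ n) : growthRate f s ≤ t := by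
  refine ENNReal.le_of_forall_lt_one_mul_le fun δ hδ => ?_
  have hinv : growthRate f s ≤ δ⁻¹ * t :=
    limsup_le_of_le (h := eventually_iSup_rpow_one_div_le hD hf (ENNReal.one_lt_inv.2 hδ))
  calc δ * growthRate f s ≤ δ * δ⁻¹ * t := by rw [mul_assoc]; gcongr
    _ ≤ t := mul_le_of_le_one_left' (ENNReal.mul_inv_le_one δ)

lemma le_growthRate_pow {M : Type*} [Monoid M] {f : M → ℝ≥0∞}
    (hf : ∀ a, ∀ m ≠ 0, f a ^ m ≤ f (a ^ m)) {s : Set M} {n : ℕ} (hn : n ≠ 0) {a : M}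
    (ha : a ∈ s ^ n) : f a ≤ growthRate f s ^ n := by
  rw [← ENNReal.rpow_natCast, ← ENNReal.rpow_inv_le_iff (by positivity)]
  refine le_limsup_of_frequently_le (frequently_atTop.2 fun N => ?_)
  refine ⟨n * (N + 1), by nlinarith [hn.bot_lt], ?_⟩
  have hmem : a ^ (N + 1) ∈ s ^ (n * (N + 1)) := by rw [pow_mul]; exact Set.pow_mem_pow ha
  refine le_iSup₂_of_le (a ^ (N + 1)) hmem ?_
  calc f a ^ (n : ℝ)⁻¹ = (f a ^ (N + 1)) ^ (1 / ((n * (N + 1) : ℕ) : ℝ)) := by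
        rw [← ENNReal.rpow_natCast, ← ENNReal.rpow_mul]
        congr 1
        push_cast
        field_simp
    _ ≤ f (a ^ (N + 1)) ^ (1 / ((n * (N + 1) : ℕ) : ℝ)) :=
        ENNReal.rpow_le_rpow (hf a _ N.succ_ne_zero) (by positivity)

lemma generalizedSpectralRadius_le_jointSpectralRadius {A : Type*} [NormedRing A]
    [NormedAlgebra ℂ A] [CompleteSpace A] (s : Set A) :
    generalizedSpectralRadius ℂ s ≤ jointSpectralRadius s :=
  growthRate_mono spectralRadius_le_enorm s

lemma spectralRadius_le_generalizedSpectralRadius_pow {𝕜 A : Type*} [NormedField 𝕜] [Ring A]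
    [Algebra 𝕜 A] {s : Set A} {n : ℕ} {a : A} (ha : a ∈ s ^ n) :
    spectralRadius 𝕜 a ≤ generalizedSpectralRadius 𝕜 s ^ n := by
  rcases eq_or_ne n 0 with rfl | hn
  · obtain rfl : a = 1 := by simpa using ha
    cases subsingleton_or_nontrivial A <;> simp
  · exact le_growthRate_pow spectrum.spectralRadius_pow_le hn ha

lemma jointSpectralRadius_image {F A B : Type*} [NormedRing A] [NormedRing B] [FunLike F A B]
    [RingHomClass F A B] (φ : F) (hφ : Isometry φ) (s : Set A) :
    jointSpectralRadius (φ '' s) = jointSpectralRadius s := by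
  have hcomp : (‖·‖ₑ) ∘ φ = (‖·‖ₑ) := funext fun a =>
    congrArg ENNReal.ofNNReal (hφ.nnnorm_map_of_map_zero (map_zero φ) a)
  rw [jointSpectralRadius, jointSpectralRadius, ← hcomp]
  exact growthRate_image _ φ s

lemma generalizedSpectralRadius_image {A B : Type*} [NormedRing A] [NormedAlgebra ℂ A]
    [CompleteSpace A] [NormedRing B] [NormedAlgebra ℂ B] [CompleteSpace B] (φ : A →ₐ[ℂ] B)
    (hφ : Isometry φ) (s : Set A) :
    generalizedSpectralRadius ℂ (φ '' s) = generalizedSpectralRadius ℂ s := by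
  have hcomp : spectralRadius ℂ ∘ φ = spectralRadius ℂ :=
    funext (spectralRadius_map_of_isometry φ hφ)
  rw [generalizedSpectralRadius, generalizedSpectralRadius, ← hcomp]
  exact growthRate_image _ φ s

end GrowthRate

/-! ### The Berger–Wang formula in finite-dimensional algebras -/

section JointSpectralRadius

lemma mem_closure_iff_exists_mem_pow {M : Type*} [Monoid M] {s : Set M} {a : M} :
    a ∈ Submonoid.closure s ↔ ∃ n, a ∈ s ^ n := by
  refine ⟨fun ha => ?_, fun ⟨n, ha⟩ => ?_⟩
  · induction ha using Submonoid.closure_induction with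
    | mem a ha => exact ⟨1, by rwa [pow_one]⟩
    | one => exact ⟨0, Set.one_mem_one⟩
    | mul a b _ _ iha ihb =>
      obtain ⟨⟨m, hm⟩, n, hn⟩ := iha, ihb
      exact ⟨m + n, by rw [pow_add]; exact Set.mul_mem_mul hm hn⟩
  · exact Submonoid.pow_subset Submonoid.subset_closure ha

lemma jointSpectralRadius_le_one_of_sub_mem_isNilpotent {A : Type*} [NormedRing A] {s : Set A}
    (hs : Bornology.IsBounded s) {J : Ideal A} [J.IsTwoSided] (hJ : IsNilpotent J) {C : ℝ≥0}
    (hC : ∀ n, ∀ a ∈ s ^ n, ∃ b, ‖b‖₊ ≤ C ∧ a - b ∈ J) : jointSpectralRadius s ≤ 1 := by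
  refine le_of_forall_gt_imp_ge_of_dense fun t ht => ?_
  cases t with
  | top => exact le_top
  | coe t =>
    rw [ENNReal.one_lt_coe_iff] at ht
    obtain ⟨k, hk⟩ := hJ
    obtain ⟨R, hRpos, hR⟩ := hs.exists_pos_norm_le
    lift R to ℝ≥0 using hRpos.le
    obtain ⟨n, hn⟩ := pow_unbounded_of_one_lt (C + 1) ht
    have hn0 : n ≠ 0 := by rintro rfl; simp at hn
    let K : ℝ≥0 := ‖(1 : A)‖₊ * R ^ n + C + 1
    have bounded_mod_J (x) (hx : x ∈ s ^ n) : ∃ b, ‖b‖₊ ≤ C ∧ x - b ∈ J ∧ ‖x - b‖₊ ≤ K := by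
      obtain ⟨b, hbC, hbJ⟩ := hC n x hx
      refine ⟨b, hbC, hbJ, (nnnorm_sub_le x b).trans ?_⟩
      exact (add_le_add (nnnorm_le_of_mem_pow hR hx) hbC).trans le_self_add
    have bound_pow (m a) (ha : a ∈ (s ^ n) ^ m) : ‖a‖₊ ≤ ‖(1 : A)‖₊ * K ^ k * (t ^ n) ^ m := by
      refine (nnnorm_le_of_mem_pow_of_ideal_pow_eq_bot hk le_add_self bounded_mod_J ha).trans ?_
      rw [← mul_assoc]
      gcongr
    obtain ⟨D, hD⟩ := exists_nnnorm_le_mul_pow_of_pow hn0 ht.le hR bound_pow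
    exact growthRate_le_of_forall_le_mul_pow (D := D) ENNReal.coe_ne_top
      fun N a ha => by exact_mod_cast ENNReal.coe_le_coe.2 (hD N a ha)

lemma exists_preimage_nnnorm_le {𝕜 E F : Type*} [NontriviallyNormedField 𝕜] [CompleteSpace 𝕜]
    [NormedAddCommGroup E] [NormedSpace 𝕜 E] [FiniteDimensional 𝕜 E] [NormedAddCommGroup F]
    [NormedSpace 𝕜 F] (f : E →ₗ[𝕜] F) :
    ∃ C : ℝ≥0, ∀ x, ∃ y, f y = f x ∧ ‖y‖₊ ≤ C * ‖f x‖₊ := by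
  have := FiniteDimensional.complete 𝕜 E
  have := FiniteDimensional.complete 𝕜 f.range
  obtain ⟨C, hC, hpre⟩ := f.rangeRestrict.toContinuousLinearMap.exists_preimage_norm_le
    f.surjective_rangeRestrict
  lift C to ℝ≥0 using hC.le
  refine ⟨C, fun x => ?_⟩
  obtain ⟨y, hy, hyC⟩ := hpre (f.rangeRestrict x)
  exact ⟨y, congrArg Subtype.val hy, hyC⟩

section BoundedTrace

variable {𝕜 A : Type*} [NontriviallyNormedField 𝕜] [CompleteSpace 𝕜] [CharZero 𝕜] [NormedRing A]
  [NormedAlgebra 𝕜 A] [FiniteDimensional 𝕜 A]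

lemma exists_nnnorm_le_sub_mem_jacobson_bot {X : Set A} (hX : Submodule.span 𝕜 X = ⊤) {B : ℝ≥0}
    (hB : ∀ x ∈ X, ∀ y ∈ X, ‖regularTrace 𝕜 A (x * y)‖₊ ≤ B) :
    ∃ C : ℝ≥0, ∀ x ∈ X, ∃ b, ‖b‖₊ ≤ C ∧ x - b ∈ Ideal.jacobson (⊥ : Ideal A) := by
  obtain ⟨g, hgX, hgspan, -⟩ := Submodule.exists_fun_fin_finrank_span_eq 𝕜 X
  let Φ : A →ₗ[𝕜] Fin _ → 𝕜 := LinearMap.pi fun i => regularTrace 𝕜 A ∘ₗ LinearMap.mulLeft 𝕜 (g i)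
  obtain ⟨C, hC⟩ := exists_preimage_nnnorm_le Φ
  refine ⟨C * B, fun x hx => ?_⟩
  obtain ⟨b, hbx, hbC⟩ := hC x
  have hΦx : ‖Φ x‖₊ ≤ B := pi_nnnorm_le_iff.2 fun i => hB (g i) (hgX i) x hx
  refine ⟨b, hbC.trans (by gcongr), mem_jacobson_bot_of_regularTrace_mul_eq_zero (K := 𝕜) ?_⟩
  have hker : regularTrace 𝕜 A ∘ₗ LinearMap.mulRight 𝕜 (x - b) = 0 := by
    refine LinearMap.ext_on_range (hgspan.trans hX) fun i => ?_
    have hi : regularTrace 𝕜 A (g i * b) = regularTrace 𝕜 A (g i * x) := congrFun hbx i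
    simp [mul_sub, hi]
  exact LinearMap.congr_fun hker

lemma jointSpectralRadius_le_one_of_regularTrace_le {s : Set A} (hs : Bornology.IsBounded s)
    (hspan : Submodule.span 𝕜 (Submonoid.closure s : Set A) = ⊤) {B : ℝ≥0}
    (hB : ∀ a ∈ Submonoid.closure s, ‖regularTrace 𝕜 A a‖₊ ≤ B) : jointSpectralRadius s ≤ 1 := by
  obtain ⟨C, hC⟩ :=
    exists_nnnorm_le_sub_mem_jacobson_bot hspan fun x hx y hy => hB _ (mul_mem hx hy)
  have := IsArtinianRing.of_finite 𝕜 A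
  exact jointSpectralRadius_le_one_of_sub_mem_isNilpotent hs IsArtinianRing.isNilpotent_jacobson_bot
    fun n a ha => hC a (mem_closure_iff_exists_mem_pow.2 ⟨n, ha⟩)

end BoundedTrace

variable {A : Type*} [NormedRing A] [NormedAlgebra ℂ A] [FiniteDimensional ℂ A]

lemma jointSpectralRadius_le_one_of_adjoin_eq_top {s : Set A} (hs : Bornology.IsBounded s)
    (htop : Algebra.adjoin ℂ s = ⊤) (hgen : generalizedSpectralRadius ℂ s ≤ 1) :
    jointSpectralRadius s ≤ 1 := by
  have hspan : Submodule.span ℂ (Submonoid.closure s : Set A) = ⊤ := by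
    rw [← Algebra.adjoin_eq_span, htop, Algebra.top_toSubmodule]
  refine jointSpectralRadius_le_one_of_regularTrace_le hs hspan (B := finrank ℂ A) fun a ha => ?_
  obtain ⟨n, ha⟩ := mem_closure_iff_exists_mem_pow.1 ha
  rw [← ENNReal.coe_le_coe, ← enorm_eq_nnnorm]
  calc ‖regularTrace ℂ A a‖ₑ ≤ finrank ℂ A * spectralRadius ℂ a := enorm_regularTrace_le a
    _ ≤ finrank ℂ A * generalizedSpectralRadius ℂ s ^ n := by
        gcongr; exact spectralRadius_le_generalizedSpectralRadius_pow ha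
    _ ≤ finrank ℂ A := mul_le_of_le_one_right' (pow_le_one₀ zero_le hgen)

lemma jointSpectralRadius_le_one_of_generalizedSpectralRadius_le_one {s : Set A}
    (hs : Bornology.IsBounded s) (hgen : generalizedSpectralRadius ℂ s ≤ 1) :
    jointSpectralRadius s ≤ 1 := by
  let φ : Algebra.adjoin ℂ s →ₐ[ℂ] A := (Algebra.adjoin ℂ s).val
  have hφ : Isometry φ := isometry_subtype_coe
  have himage : φ '' (φ ⁻¹' s) = s := Set.image_preimage_eq_of_subset <| by
    simp [φ, Algebra.subset_adjoin]
  have := FiniteDimensional.complete ℂ A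
  have := FiniteDimensional.complete ℂ (Algebra.adjoin ℂ s)
  rw [← himage, generalizedSpectralRadius_image φ hφ] at hgen
  rw [← himage, jointSpectralRadius_image φ hφ]
  exact jointSpectralRadius_le_one_of_adjoin_eq_top (hφ.antilipschitz.isBounded_preimage hs)
    Algebra.adjoin_adjoin_coe_preimage hgen

theorem berger_wang_general {s : Set A} (hs : Bornology.IsBounded s) :
    generalizedSpectralRadius ℂ s = jointSpectralRadius s := by
  have := FiniteDimensional.complete ℂ A
  refine (generalizedSpectralRadius_le_jointSpectralRadius s).antisymm ?_
  refine le_of_forall_gt_imp_ge_of_dense fun r hr => ?_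
  cases r with
  | top => exact le_top
  | coe r =>
    have hr0 : (r : ℝ≥0∞) ≠ 0 := hr.ne_bot
    have hc : (r : ℂ)⁻¹ ≠ 0 := by simpa using hr0
    have hcr : ‖(r : ℂ)⁻¹‖ₑ = (r : ℝ≥0∞)⁻¹ := by
      rw [enorm_inv (by simpa using hr0)]
      simp [enorm_eq_nnnorm]
    have hgen : generalizedSpectralRadius ℂ ((r : ℂ)⁻¹ • s) ≤ 1 := by
      rw [generalizedSpectralRadius,
        growthRate_smul fun n => spectralRadius_smul (pow_ne_zero n hc), hcr,
        ENNReal.inv_mul_le_iff hr0 ENNReal.coe_ne_top, mul_one]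
      exact hr.le
    have hjoint := jointSpectralRadius_le_one_of_generalizedSpectralRadius_le_one (hs.smul₀ _) hgen
    rwa [jointSpectralRadius, growthRate_smul fun n => enorm_smul _, hcr,
      ENNReal.inv_mul_le_iff hr0 ENNReal.coe_ne_top, mul_one] at hjoint

end JointSpectralRadius

/-! ### Products of matrices along switching signals -/

section Matrix

open scoped Matrix.Norms.L2Operator

variable {d : ℕ} {I : Type*} {S : I → Matrix (Fin d) (Fin d) ℂ}

lemma prodS_congr {x y : ℕ → I} {n : ℕ} (hxy : ∀ k < n, x k = y k) :
    prodS S x n = prodS S y n := by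
  induction n with
  | zero => rfl
  | succ n ih =>
    rw [prodS, prodS, hxy n n.lt_succ_self, ih fun k hk => hxy k (hk.trans n.lt_succ_self)]

lemma range_prodS [Nonempty I] (S : I → Matrix (Fin d) (Fin d) ℂ) (n : ℕ) :
    Set.range (prodS S · n) = Set.range S ^ n := by
  induction n with
  | zero => exact Set.range_const
  | succ n ih =>
    rw [pow_succ', ← ih]
    refine Set.Subset.antisymm ?_ ?_
    · rintro _ ⟨x, rfl⟩
      exact Set.mul_mem_mul ⟨x n, rfl⟩ ⟨x, rfl⟩
    · rintro _ ⟨_, ⟨i, rfl⟩, _, ⟨x, rfl⟩, rfl⟩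
      refine ⟨Function.update x n i, ?_⟩
      have hprod : prodS S (Function.update x n i) n = prodS S x n :=
        prodS_congr fun k hk => Function.update_of_ne hk.ne i x
      simp [prodS, hprod]

lemma limsup_iSup_toReal_prodS [Nonempty I] {f : Matrix (Fin d) (Fin d) ℂ → ℝ≥0∞}
    (hf : ∀ a, f a ≤ ‖a‖ₑ) (hS : Bornology.IsBounded (Set.range S)) :
    limsup (fun n : ℕ => ⨆ x : ℕ → I, (f (prodS S x n)).toReal ^ (1 / (n : ℝ))) atTop =
      (growthRate f (Set.range S)).toReal := by
  obtain ⟨R, hRpos, hR⟩ := hS.exists_pos_norm_le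
  lift R to ℝ≥0 using hRpos.le
  have hbound (n : ℕ) (a) (ha : a ∈ Set.range S ^ n) :
      f a ≤ ‖(1 : Matrix (Fin d) (Fin d) ℂ)‖₊ * (R : ℝ≥0∞) ^ n :=
    (hf a).trans (by exact_mod_cast ENNReal.coe_le_coe.2 (nnnorm_le_of_mem_pow hR ha))
  have hfin (a) : f a ≠ ∞ := ne_top_of_le_ne_top enorm_ne_top (hf a)
  rw [growthRate, ← ENNReal.limsup_toReal_eq (b := 2 * R) (by finiteness)
    (eventually_iSup_rpow_one_div_le ENNReal.coe_ne_top hbound ENNReal.one_lt_two)]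
  refine congrArg (limsup · atTop) (funext fun n => ?_)
  rw [← range_prodS, iSup_range, ENNReal.toReal_iSup]
  · simp_rw [ENNReal.toReal_rpow]
  · exact fun x => ENNReal.rpow_ne_top_of_nonneg (by positivity) (hfin _)

end Matrix

/-- **The Berger–Wang formula.** For a bounded family of `d × d` complex matrices, the
generalized spectral radius equals the joint spectral radius.  The supremum over words
`w ∈ I^n` is expressed as the supremum over all switching signals `x : ℕ → I` (only the
first `n` letters of the signal matter in `prodS S x n`). -/
theorem berger_wang {d : ℕ} (hd : 1 ≤ d) {I : Type*} [Nonempty I]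
    (S : I → Matrix (Fin d) (Fin d) ℂ) (hbdd : ∃ C : ℝ, ∀ i : I, opNorm (S i) ≤ C) :
    Filter.limsup
        (fun n : ℕ => ⨆ x : ℕ → I, specRad (prodS S x n) ^ (1 / (n : ℝ))) Filter.atTop =
      Filter.limsup
        (fun n : ℕ => ⨆ x : ℕ → I, opNorm (prodS S x n) ^ (1 / (n : ℝ))) Filter.atTop := by
  open scoped Matrix.Norms.L2Operator in
  have hS : Bornology.IsBounded (Set.range S) :=
    isBounded_iff_forall_norm_le.2 (hbdd.imp fun _ hC => Set.forall_mem_range.2 hC)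
  calc
    _ = (generalizedSpectralRadius ℂ (Set.range S)).toReal :=
      limsup_iSup_toReal_prodS spectralRadius_le_enorm hS
    _ = (jointSpectralRadius (Set.range S)).toReal := by rw [berger_wang_general hS]
    _ = _ := (limsup_iSup_toReal_prodS (fun _ => le_rfl) hS).symm
end

section
/- Let d ≥ 1, let I be a metric space, let S : I → Matrix d d ℂ be continuous, and let Λ ⊆ Σ_I^+ be a nonempty compact θ_+-invariant subset. Then S is Λ-absolutely asymptotically stable (i.e. S_{i_n}···S_{i_1} → 0 as n → ∞ for every i(·) ∈ Λ) if and only if ρ(S|Λ) < 1. -/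
open Filter Topology MeasureTheory

/-- `Λ` is invariant under the one-sided shift `θ₊`. -/
def ShiftInv {I : Type*} (Λ : Set (ℕ → I)) : Prop :=
  ∀ x ∈ Λ, (fun n => x (n + 1)) ∈ Λ

/-- Generalized spectral radius of `S` restricted to `Λ`. -/
noncomputable def gsr {d : ℕ} {I : Type*} (S : I → Matrix (Fin d) (Fin d) ℂ)
    (Λ : Set (ℕ → I)) : ℝ :=
  Filter.limsup (fun n : ℕ => ⨆ x : Λ, specRad (prodS S x.1 n) ^ (1 / (n : ℝ))) Filter.atTop

/-!
Compactness of `Λ` turns pointwise convergence into uniform exponential decay, which gives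
`ρ(S|Λ) < 1` because the spectral radius is bounded by any operator norm.

The converse is a finite-dimensional statement: there is `N` depending only on `d` such that a
sequence of matrices of norm at most one, all of whose consecutive products have spectral radius at
most `δ`, satisfies `‖A (N - 1) ⋯ A 0‖ ≤ C δ ^ α`. For `δ = 0` all consecutive products are
nilpotent, and the product of `N` terms vanishes: blocks of rank at most `r` factor as `W k * V k`
through `r` dimensions, and if all `V (k + 1) * W k` were invertible, then the functionals
`V ↦ det (V * W k)` would be linearly independent in a space of bounded dimension (the skew Bollobás
argument), so the rank drops along a bounded number of blocks. The Nullstellensatz makes this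
vanishing quantitative, since nilpotency of the consecutive products is the vanishing of finitely
many polynomials in the entries, the non-leading coefficients of characteristic polynomials.

Let `a m` be the largest norm of the products of length `m` along `Λ`. Applied to blocks of length
`m` divided by `a m`, the estimate reads `a (N * m) ≤ C q ^ m * a m ^ N` with `q < 1` as long as
`a m ≥ 1`. Iterating it along `m = N ^ k * m₀` forces `a m < 1` for some `m`, whence uniform
exponential decay.
-/

section Window

variable {M : Type*} [Monoid M]

/-- The product `A (i + n - 1) * ⋯ * A i` of the `n` consecutive terms of `A` starting at index `i`,
later terms on the left as in `prodS`. -/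
def windowProd (A : ℕ → M) (i : ℕ) : ℕ → M
  | 0 => 1
  | n + 1 => A (i + n) * windowProd A i n

lemma windowProd_add (A : ℕ → M) (i m n : ℕ) :
    windowProd A i (m + n) = windowProd A (i + m) n * windowProd A i m := by
  induction n with
  | zero => simp [windowProd]
  | succ n ih => rw [← add_assoc, windowProd, ih, windowProd, mul_assoc, add_assoc]

lemma windowProd_shift (A : ℕ → M) (i j n : ℕ) :
    windowProd (fun k => A (i + k)) j n = windowProd A (i + j) n := by
  induction n with
  | zero => rfl
  | succ n ih => simp only [windowProd, ih, add_assoc]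

lemma windowProd_windowProd (A : ℕ → M) (N i n : ℕ) :
    windowProd (fun k => windowProd A (k * N) N) i n = windowProd A (i * N) (n * N) := by
  induction n with
  | zero => simp [windowProd]
  | succ n ih => rw [windowProd, ih, add_mul n, one_mul, windowProd_add, add_mul]

lemma map_windowProd {M' F : Type*} [Monoid M'] [FunLike F M M'] [MonoidHomClass F M M'] (f : F)
    (A : ℕ → M) (i n : ℕ) : f (windowProd A i n) = windowProd (fun k => f (A k)) i n := by
  induction n with
  | zero => exact map_one f
  | succ n ih => simp only [windowProd, map_mul, ih]

lemma windowProd_congr {A B : ℕ → M} {i n : ℕ} (h : ∀ k < i + n, A k = B k) :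
    windowProd A i n = windowProd B i n := by
  induction n with
  | zero => rfl
  | succ n ih => rw [windowProd, windowProd, h _ (by lia), ih fun k hk => h k (by lia)]

lemma windowProd_smul {R : Type*} [CommMonoid R] [MulAction R M] [IsScalarTower R M M]
    [SMulCommClass R M M] (c : R) (A : ℕ → M) (i n : ℕ) :
    windowProd (fun k => c • A k) i n = c ^ n • windowProd A i n := by
  induction n with
  | zero => simp [windowProd]
  | succ n ih => rw [windowProd, windowProd, ih, smul_mul_smul_comm, pow_succ']

end Window

section Rank

open Matrix

variable {m n F : Type*} [Fintype n] [Field F]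

lemma exists_eq_mul_of_rank_le {A : Matrix m n F} {r : ℕ} (h : A.rank ≤ r) :
    ∃ (W : Matrix m (Fin r) F) (V : Matrix (Fin r) n F), A = W * V := by
  classical
  obtain ⟨f, hf⟩ : ∃ f : LinearMap.range A.mulVecLin →ₗ[F] (Fin r → F), Function.Injective f :=
    finrank_le_iff_exists_linearMap.mp (h.trans_eq (Module.finrank_fin_fun F).symm)
  obtain ⟨g, hg⟩ := f.exists_leftInverse_of_injective (LinearMap.ker_eq_bot.mpr hf)
  refine ⟨LinearMap.toMatrix' ((LinearMap.range A.mulVecLin).subtype ∘ₗ g),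
    LinearMap.toMatrix' (f ∘ₗ A.mulVecLin.rangeRestrict), ?_⟩
  rw [← LinearMap.toMatrix'_comp, LinearMap.comp_assoc, ← LinearMap.comp_assoc _ f g, hg,
    LinearMap.id_comp, LinearMap.subtype_comp_codRestrict, ← Matrix.toLin'_apply',
    LinearMap.toMatrix'_toLin']

lemma rank_lt_card_of_det_eq_zero [DecidableEq n] {A : Matrix n n F} (h : A.det = 0) :
    A.rank < Fintype.card n := by
  obtain ⟨v, hv, hAv⟩ := exists_mulVec_eq_zero_iff.mpr h
  have hker : 0 < Module.finrank F (LinearMap.ker A.mulVecLin) :=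
    Module.finrank_pos_iff_exists_ne_zero.mpr ⟨⟨v, hAv⟩, fun h0 => hv congr(($h0 : n → F))⟩
  have := A.mulVecLin.finrank_range_add_finrank_ker
  rw [Module.finrank_fintype_fun_eq_card] at this
  rw [Matrix.rank]
  lia

variable [Fintype m] [DecidableEq m] [DecidableEq n]

lemma det_mul_eq_zero_of_isNilpotent [Nonempty n] {W : Matrix m n F} {Q : Matrix n n F}
    {V : Matrix n m F} (hQ : Q.det ≠ 0) (h : IsNilpotent (W * Q * V)) : (V * W).det = 0 := by
  obtain ⟨p, hp⟩ := h
  have pow_comm (k : ℕ) : V * (W * Q * V) ^ k * W = V * W * (Q * (V * W)) ^ k := by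
    induction k with
    | zero => simp
    | succ k ih =>
      calc V * (W * Q * V) ^ (k + 1) * W = V * W * Q * (V * (W * Q * V) ^ k * W) := by
            simp only [pow_succ', Matrix.mul_assoc]
        _ = V * W * (Q * (V * W)) ^ (k + 1) := by
            rw [ih]
            simp only [pow_succ', Matrix.mul_assoc]
  have hdet : (V * W).det * (Q.det * (V * W).det) ^ p = 0 := by
    rw [← det_mul Q, ← det_pow, ← det_mul, ← pow_comm, hp, Matrix.mul_zero, Matrix.zero_mul,
      det_zero]
  by_contra hVW
  exact mul_ne_zero hVW (pow_ne_zero p (mul_ne_zero hQ hVW)) hdet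

end Rank

section SkewBollobas

open Matrix

lemma linearIndependent_of_triangular {F ι E : Type*} [Field F] [Finite ι] [LinearOrder ι]
    [AddCommGroup E] [Module F E] {v : ι → E} (φ : ι → E →ₗ[F] F) (hdiag : ∀ i, φ i (v i) ≠ 0)
    (htri : ∀ i j, i < j → φ i (v j) = 0) : LinearIndependent F v := by
  cases nonempty_fintype ι
  let T : Matrix ι ι F := of fun j i => φ i (v j)
  have hT : T.det ≠ 0 := by
    have hup : T.IsUpperTriangular := fun j i hij => htri i j hij
    rw [det_of_isUpperTriangular hup]
    exact Finset.prod_ne_zero_iff.mpr fun i _ => hdiag i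
  exact LinearIndependent.of_comp (LinearMap.pi φ) (linearIndependent_rows_of_det_ne_zero hT)

lemma exists_bound_of_skew_det (ι F : Type*) [Fintype ι] [Field F] (q : ℕ) :
    ∃ B : ℕ, ∀ (m : ℕ) (W : Fin m → Matrix ι (Fin q) F) (V : Fin m → Matrix (Fin q) ι F),
      (∀ i, (V i * W i).det ≠ 0) → (∀ i j, i < j → (V i * W j).det = 0) → m ≤ B := by
  let E := MultilinearMap F (fun _ : Fin q => ι → F) F
  -- `detForm W V = det (V * W)`, as a multilinear form in the rows of `V`
  let detForm (W : Matrix ι (Fin q) F) : E :=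
    (detRowAlternating (n := Fin q)).toMultilinearMap.compLinearMap fun _ => vecMulLinear W
  let evalAt (V : Matrix (Fin q) ι F) : E →ₗ[F] F :=
    { toFun := fun f => f V, map_add' := fun _ _ => rfl, map_smul' := fun _ _ => rfl }
  refine ⟨Module.finrank F E, fun m W V hdiag hskew => ?_⟩
  have hli : LinearIndependent F fun j => detForm (W j) :=
    linearIndependent_of_triangular (fun i => evalAt (V i)) hdiag hskew
  simpa using hli.fintype_card_le_finrank

end SkewBollobas

section Nilpotent

open Matrix

lemma windowProd_mul {m n R : Type*} [Fintype m] [DecidableEq m] [Fintype n] [DecidableEq n]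
    [Semiring R] (W : ℕ → Matrix m n R) (V : ℕ → Matrix n m R) (i k : ℕ) :
    windowProd (fun k => W k * V k) i (k + 1) =
      W (i + k) * windowProd (fun k => V (k + 1) * W k) i k * V i := by
  induction k with
  | zero => simp [windowProd]
  | succ k ih =>
    rw [windowProd, ih, windowProd]
    simp only [Matrix.mul_assoc, add_assoc]

variable {M : Type*} [MonoidWithZero M]

/-- Every product of one or more consecutive terms of `A` is nilpotent. This is the limiting case
of a sequence all of whose consecutive products have small spectral radius. -/
def NilpotentWindows (A : ℕ → M) : Prop :=
  ∀ i n, IsNilpotent (windowProd A i (n + 1))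

lemma NilpotentWindows.shift {A : ℕ → M} (h : NilpotentWindows A) (i : ℕ) :
    NilpotentWindows fun k => A (i + k) := fun j n => by
  rw [windowProd_shift]
  exact h _ _

lemma NilpotentWindows.windowProd {A : ℕ → M} (h : NilpotentWindows A) {N : ℕ} (hN : 0 < N) :
    NilpotentWindows fun k => windowProd A (k * N) N := fun i n => by
  rw [windowProd_windowProd, ← Nat.sub_one_add_one (Nat.mul_pos n.succ_pos hN).ne']
  exact h _ _

-- As long as the `V (k + 1) * W k` are invertible, nilpotency forces `det (V i * W j) = 0` for
-- `i ≤ j`, so the pairs `V (k + 1), W k` form a skew system.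
lemma exists_det_mul_eq_zero (ι F : Type*) [Fintype ι] [DecidableEq ι] [Field F] (q : ℕ)
    [NeZero q] : ∃ m : ℕ, ∀ (W : ℕ → Matrix ι (Fin q) F) (V : ℕ → Matrix (Fin q) ι F),
      NilpotentWindows (fun k => W k * V k) → ∃ k < m, (V (k + 1) * W k).det = 0 := by
  obtain ⟨B, hB⟩ := exists_bound_of_skew_det ι F q
  refine ⟨B + 1, fun W V hnil => ?_⟩
  by_contra! hne
  have det_window_ne_zero (i n : ℕ) (h : i + n ≤ B + 1) :
      (windowProd (fun k => V (k + 1) * W k) i n).det ≠ 0 := by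
    induction n with
    | zero => simp [windowProd]
    | succ n ih =>
      rw [windowProd, det_mul]
      exact mul_ne_zero (hne _ (by lia)) (ih (by lia))
  have det_eq_zero (i n : ℕ) (h : i + n ≤ B + 1) : (V i * W (i + n)).det = 0 :=
    det_mul_eq_zero_of_isNilpotent (det_window_ne_zero i n h) (windowProd_mul W V i n ▸ hnil i n)
  have : B + 1 ≤ B := hB (B + 1) (fun j => W j) (fun j => V (j + 1)) (fun j => hne j j.2)
    fun i j hij => by
      obtain ⟨n, hn⟩ := Nat.exists_eq_add_of_le (Nat.succ_le_of_lt hij)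
      exact hn ▸ det_eq_zero (i + 1) n (by lia)
  lia

lemma exists_rank_windowProd_le (ι F : Type*) [Fintype ι] [DecidableEq ι] [Field F] {r : ℕ}
    (hr : r ≤ Fintype.card ι) :
    ∃ N > 0, ∀ A : ℕ → Matrix ι ι F, NilpotentWindows A → (windowProd A 0 N).rank ≤ r := by
  induction hr using Nat.decreasingInduction with
  | self => exact ⟨1, one_pos, fun A _ => rank_le_card_width _⟩
  | of_succ r _ ih =>
    obtain ⟨N, hN, hrank⟩ := ih
    obtain ⟨m, hm⟩ := exists_det_mul_eq_zero ι F (r + 1)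
    refine ⟨(m + 1) * N, Nat.mul_pos m.succ_pos hN, fun A hA => ?_⟩
    have hblock (k : ℕ) : (windowProd A (k * N) N).rank ≤ r + 1 := by
      simpa only [windowProd_shift, add_zero] using hrank _ (hA.shift (k * N))
    choose W V hWV using fun k => exists_eq_mul_of_rank_le (hblock k)
    have hfun : (fun k => windowProd A (k * N) N) = fun k => W k * V k := funext hWV
    obtain ⟨k, hk, hdet⟩ := hm W V (hfun ▸ hA.windowProd hN)
    obtain ⟨l, rfl⟩ := Nat.exists_eq_add_of_lt hk
    have hlt : (V (k + 1) * W k).rank < r + 1 := by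
      simpa using rank_lt_card_of_det_eq_zero hdet
    have hsplit : windowProd A 0 ((k + l + 1 + 1) * N) =
        W (k + l + 1) * (windowProd (fun k => V (k + 1) * W k) (k + 1) l *
          (V (k + 1) * W k * windowProd (fun k => V (k + 1) * W k) 0 k)) * V 0 := by
      rw [← zero_mul N, ← windowProd_windowProd, hfun, windowProd_mul, zero_mul, zero_add,
        add_right_comm, windowProd_add, windowProd, zero_add, zero_add]
    calc (windowProd A 0 ((k + l + 1 + 1) * N)).rank
      _ ≤ (V (k + 1) * W k).rank := by
          rw [hsplit]
          exact (rank_mul_le_left _ _).trans <| (rank_mul_le_right _ _).trans <|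
            (rank_mul_le_right _ _).trans (rank_mul_le_left _ _)
      _ ≤ r := Nat.le_of_lt_succ hlt

lemma exists_windowProd_eq_zero (ι F : Type*) [Fintype ι] [DecidableEq ι] [Field F] :
    ∃ N > 0, ∀ A : ℕ → Matrix ι ι F, NilpotentWindows A → windowProd A 0 N = 0 := by
  obtain ⟨N, hN, hrank⟩ := exists_rank_windowProd_le ι F (Nat.zero_le _)
  refine ⟨N, hN, fun A hA => ?_⟩
  obtain ⟨W, V, h⟩ := exists_eq_mul_of_rank_le (hrank A hA)
  rw [h]
  ext i j
  simp [mul_apply]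

lemma isNilpotent_of_charpoly_coeff_eq_zero {ι R : Type*} [Fintype ι] [DecidableEq ι]
    [CommRing R] {A : Matrix ι ι R}
    (h : ∀ e < Fintype.card ι, A.charpoly.coeff e = 0) : IsNilpotent A := by
  nontriviality R
  refine ⟨Fintype.card ι, ?_⟩
  have hdeg := A.charpoly_natDegree_eq_dim
  have hlead : A.charpoly.coeff (Fintype.card ι) = 1 := hdeg ▸ A.charpoly_monic.coeff_natDegree
  have := aeval_self_charpoly A
  rw [Polynomial.aeval_eq_sum_range, hdeg, Finset.sum_range_succ, hlead, one_smul,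
    Finset.sum_eq_zero fun e he => by rw [h e (Finset.mem_range.mp he), zero_smul],
    zero_add] at this
  exact this

end Nilpotent

section Lojasiewicz

open MvPolynomial

variable {𝕜 σ κ : Type*} [NormedField 𝕜] {c : κ → MvPolynomial σ 𝕜} {K : Set (σ → 𝕜)}

lemma exists_norm_eval_le_of_mem_span (hK : IsCompact K) {g : MvPolynomial σ 𝕜}
    (hg : g ∈ Ideal.span (Set.range c)) :
    ∃ C : ℝ, ∀ x ∈ K, ∀ δ : ℝ, (∀ k, ‖eval x (c k)‖ ≤ δ) → ‖eval x g‖ ≤ C * δ := by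
  induction hg using Submodule.span_induction with
  | mem g hg =>
    obtain ⟨k, rfl⟩ := hg
    exact ⟨1, fun x _ δ h => by simpa only [one_mul] using h k⟩
  | zero => exact ⟨0, fun x _ δ _ => by simp⟩
  | add g g' _ _ ih ih' =>
    obtain ⟨C, hC⟩ := ih
    obtain ⟨C', hC'⟩ := ih'
    refine ⟨C + C', fun x hx δ h => ?_⟩
    rw [map_add, add_mul]
    exact norm_add_le_of_le (hC x hx δ h) (hC' x hx δ h)
  | smul a g _ ih =>
    obtain ⟨C, hC⟩ := ih
    obtain ⟨D, hD⟩ := hK.exists_bound_of_continuousOn (continuous_eval a).continuousOn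
    refine ⟨D * C, fun x hx δ h => ?_⟩
    rw [smul_eq_mul, map_mul, mul_assoc]
    exact norm_mul_le_of_le (hD x hx) (hC x hx δ h)

-- By the Nullstellensatz, `f` lies in the radical of the ideal generated by the `c k`.
lemma exists_norm_eval_pow_le [IsAlgClosed 𝕜] [Finite σ] (c : κ → MvPolynomial σ 𝕜) :
    ∃ p ≠ 0, ∀ f : MvPolynomial σ 𝕜, (∀ x, (∀ k, eval x (c k) = 0) → eval x f = 0) →
      ∀ K : Set (σ → 𝕜), IsCompact K → ∃ C : ℝ, ∀ x ∈ K, ∀ δ : ℝ,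
        (∀ k, ‖eval x (c k)‖ ≤ δ) → ‖eval x f‖ ^ p ≤ C * δ := by
  let J := Ideal.span (Set.range c)
  obtain ⟨p, hp⟩ := J.exists_radical_pow_le_of_fg J.radical.fg_of_isNoetherianRing
  refine ⟨p + 1, p.succ_ne_zero, fun f hf K hK => ?_⟩
  have hrad : f ∈ J.radical := by
    rw [← vanishingIdeal_zeroLocus_eq_radical (K := 𝕜), mem_vanishingIdeal_iff]
    exact fun x hx => hf x fun k => hx (c k) (Ideal.subset_span ⟨k, rfl⟩)
  have hmem : f ^ (p + 1) ∈ J := hp (Ideal.pow_le_pow_right p.le_succ (Ideal.pow_mem_pow hrad _))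
  obtain ⟨C, hC⟩ := exists_norm_eval_le_of_mem_span hK hmem
  exact ⟨C, fun x hx δ h => by simpa only [map_pow, norm_pow] using hC x hx δ h⟩

end Lojasiewicz

section GenericSequence

open Matrix MvPolynomial

variable {ι : Type*}

/-- The universal sequence of `N` square matrices, whose entries are independent variables,
continued by zero matrices. -/
noncomputable def genericSeq (ι R : Type*) [CommSemiring R] (N k : ℕ) :
    Matrix ι ι (MvPolynomial (Fin N × ι × ι) R) :=
  if h : k < N then of fun a b => X (⟨k, h⟩, a, b) else 0

lemma map_eval_genericSeq {R : Type*} [CommSemiring R] (A : ℕ → Matrix ι ι R) (N k : ℕ) :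
    (genericSeq ι R N k).map (eval fun v => A v.1 v.2.1 v.2.2) = if k < N then A k else 0 := by
  unfold genericSeq
  split_ifs
  · ext a b
    simp
  · simp

variable [Fintype ι] [DecidableEq ι]

lemma map_windowProd_apply {R R' : Type*} [Semiring R] [Semiring R'] (f : R →+* R')
    (A : ℕ → Matrix ι ι R) (i n : ℕ) (a b : ι) :
    f (windowProd A i n a b) = windowProd (fun k => (A k).map f) i n a b :=
  congr_fun₂ (map_windowProd f.mapMatrix A i n) a b

lemma map_charpoly_coeff_windowProd {R R' : Type*} [CommRing R] [CommRing R'] (f : R →+* R')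
    (A : ℕ → Matrix ι ι R) (i n e : ℕ) : f ((windowProd A i n).charpoly.coeff e) =
      (windowProd (fun k => (A k).map f) i n).charpoly.coeff e := by
  rw [← Polynomial.coeff_map, ← charpoly_map]
  exact congr(($(map_windowProd f.mapMatrix A i n)).charpoly.coeff e)

lemma windowProd_truncate {M : Type*} [MonoidWithZero M] (A : ℕ → M) (N i n : ℕ) :
    windowProd (fun k => if k < N then A k else 0) i (n + 1) =
      if i + n < N then windowProd A i (n + 1) else 0 := by
  split_ifs with h
  · exact windowProd_congr fun k hk => if_pos (by lia)
  · rw [windowProd, if_neg h, zero_mul]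

lemma exists_norm_windowProd_genericSeq_pow_le (ι : Type*) [Fintype ι] [DecidableEq ι] :
    ∃ N > 0, ∃ p ≠ 0, ∃ C : ℝ, ∀ x : Fin N × ι × ι → ℂ, ‖x‖ ≤ 1 → ∀ δ ≥ 0,
      (∀ i n, ∀ e < Fintype.card ι,
        ‖eval x ((windowProd (genericSeq ι ℂ N) i (n + 1)).charpoly.coeff e)‖ ≤ δ) →
      ∀ a b, ‖eval x (windowProd (genericSeq ι ℂ N) 0 N a b)‖ ^ p ≤ C * δ := by
  obtain ⟨N, hN, hzero⟩ := exists_windowProd_eq_zero ι ℂ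
  let G := genericSeq ι ℂ N
  let coeffs (v : ℕ × ℕ × Fin (Fintype.card ι)) : MvPolynomial (Fin N × ι × ι) ℂ :=
    (windowProd G v.1 (v.2.1 + 1)).charpoly.coeff v.2.2
  obtain ⟨p, hp, hpow⟩ := exists_norm_eval_pow_le coeffs
  have hvanish (a b : ι) (x : Fin N × ι × ι → ℂ) (hx : ∀ v, eval x (coeffs v) = 0) :
      eval x (windowProd G 0 N a b) = 0 := by
    have hnil : NilpotentWindows fun k => (G k).map (eval x) := fun i n =>
      isNilpotent_of_charpoly_coeff_eq_zero fun e he => by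
        rw [← map_charpoly_coeff_windowProd]
        exact hx (i, n, ⟨e, he⟩)
    rw [map_windowProd_apply, hzero _ hnil, Matrix.zero_apply]
  choose C hC using fun a b => hpow _ (hvanish a b) _ (isCompact_closedBall 0 1)
  obtain ⟨B, hB⟩ := Finite.exists_le fun v : ι × ι => C v.1 v.2
  refine ⟨N, hN, p, hp, B, fun x hx δ hδ hcoeff a b => ?_⟩
  calc ‖eval x (windowProd G 0 N a b)‖ ^ p
    _ ≤ C a b * δ := hC a b x (mem_closedBall_zero_iff.mpr hx) δ fun v => hcoeff _ _ _ v.2.2.2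
    _ ≤ B * δ := mul_le_mul_of_nonneg_right (hB (a, b)) hδ

lemma exists_norm_windowProd_apply_pow_le (ι : Type*) [Fintype ι] [DecidableEq ι] :
    ∃ N > 0, ∃ p ≠ 0, ∃ C : ℝ, ∀ A : ℕ → Matrix ι ι ℂ, (∀ k a b, ‖A k a b‖ ≤ 1) → ∀ δ ≥ 0,
      (∀ i n, ∀ e < Fintype.card ι, ‖(windowProd A i (n + 1)).charpoly.coeff e‖ ≤ δ) →
      ∀ a b, ‖windowProd A 0 N a b‖ ^ p ≤ C * δ := by
  obtain ⟨N, hN, p, hp, C, hC⟩ := exists_norm_windowProd_genericSeq_pow_le ι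
  refine ⟨N, hN, p, hp, C, fun A hA δ hδ hcoeff a b => ?_⟩
  let x (v : Fin N × ι × ι) : ℂ := A v.1 v.2.1 v.2.2
  have hx : ‖x‖ ≤ 1 := (pi_norm_le_iff_of_nonneg zero_le_one).mpr fun v => hA _ _ _
  have hsmall (i n e) (he : e < Fintype.card ι) :
      ‖eval x ((windowProd (genericSeq ι ℂ N) i (n + 1)).charpoly.coeff e)‖ ≤ δ := by
    simp only [map_charpoly_coeff_windowProd, x, map_eval_genericSeq, windowProd_truncate]
    split_ifs
    · exact hcoeff _ _ _ he
    · simpa [charpoly_zero, Polynomial.coeff_X_pow, he.ne] using hδ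
  have hentry : eval x (windowProd (genericSeq ι ℂ N) 0 N a b) = windowProd A 0 N a b := by
    simp only [map_windowProd_apply, x, map_eval_genericSeq]
    rw [windowProd_congr fun k hk => if_pos (by lia)]
  exact hentry ▸ hC x hx δ hδ hsmall a b

end GenericSequence

section SpectralRadius

open Matrix
open scoped Matrix.Norms.Operator Pointwise

section Norm

variable {ι : Type*} [Fintype ι]

lemma norm_apply_le_linfty_opNorm (A : Matrix ι ι ℂ) (a b : ι) : ‖A a b‖ ≤ ‖A‖ := by
  rw [linfty_opNorm_def]
  have hrow : ‖A a b‖₊ ≤ ∑ j, ‖A a j‖₊ :=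
    Finset.single_le_sum (f := fun j => ‖A a j‖₊) (fun _ _ => zero_le) (Finset.mem_univ b)
  exact_mod_cast hrow.trans (Finset.le_sup (f := fun i => ∑ j, ‖A i j‖₊) (Finset.mem_univ a))

lemma linfty_opNorm_le_card_mul (A : Matrix ι ι ℂ) {c : ℝ} (hc : 0 ≤ c)
    (h : ∀ a b, ‖A a b‖ ≤ c) : ‖A‖ ≤ Fintype.card ι * c := by
  rw [linfty_opNorm_def]
  lift c to NNReal using hc
  have hrow (a : ι) : ∑ b, ‖A a b‖₊ ≤ Fintype.card ι * c := by
    simpa using Finset.sum_le_card_nsmul Finset.univ (fun b => ‖A a b‖₊) c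
      fun b _ => by exact_mod_cast h a b
  exact_mod_cast Finset.sup_le fun a _ => hrow a

lemma linfty_opNorm_one_le [DecidableEq ι] : ‖(1 : Matrix ι ι ℂ)‖ ≤ 1 := by
  cases isEmpty_or_nonempty ι
  · simp [Subsingleton.elim (1 : Matrix ι ι ℂ) 0]
  · exact norm_one.le

end Norm

variable {d : ℕ} {A : Matrix (Fin d) (Fin d) ℂ}

lemma specRad_nonneg : 0 ≤ specRad A := ENNReal.toReal_nonneg

lemma specRad_le {r : ℝ} (hr : 0 ≤ r) (h : ∀ z ∈ spectrum ℂ A, ‖z‖ ≤ r) : specRad A ≤ r := by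
  lift r to NNReal using hr
  exact ENNReal.toReal_le_coe_of_le_coe (iSup₂_le fun z hz => by exact_mod_cast h z hz)

lemma norm_le_norm_of_mem_spectrum {z : ℂ} (hz : z ∈ spectrum ℂ A) : ‖z‖ ≤ ‖A‖ :=
  (spectrum.norm_le_norm_mul_of_mem hz).trans
    (mul_le_of_le_one_right (norm_nonneg A) linfty_opNorm_one_le)

lemma specRad_le_norm (A : Matrix (Fin d) (Fin d) ℂ) : specRad A ≤ ‖A‖ :=
  specRad_le (norm_nonneg A) fun _ => norm_le_norm_of_mem_spectrum

lemma norm_le_specRad_of_mem_spectrum {z : ℂ} (hz : z ∈ spectrum ℂ A) : ‖z‖ ≤ specRad A := by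
  have hfin : spectralRadius ℂ A ≠ ⊤ := ne_top_of_le_ne_top (ENNReal.coe_ne_top (r := ‖A‖₊)) <|
    iSup₂_le fun w hw => by exact_mod_cast norm_le_norm_of_mem_spectrum hw
  exact ENNReal.toReal_mono hfin <|
    le_iSup₂ (f := fun (w : ℂ) (_ : w ∈ spectrum ℂ A) => (‖w‖₊ : ENNReal)) z hz

lemma specRad_smul_le (c : ℂ) : specRad (c • A) ≤ ‖c‖ * specRad A := by
  rcases eq_or_ne c 0 with rfl | hc
  · simpa using specRad_le_norm (0 : Matrix (Fin d) (Fin d) ℂ)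
  refine specRad_le (mul_nonneg (norm_nonneg c) specRad_nonneg) fun z hz => ?_
  obtain ⟨w, hw, rfl⟩ : z ∈ Units.mk0 c hc • spectrum ℂ A :=
    spectrum.unit_smul_eq_smul A (Units.mk0 c hc) ▸ hz
  calc ‖c * w‖ = ‖c‖ * ‖w‖ := norm_mul c w
    _ ≤ ‖c‖ * specRad A := by gcongr; exact norm_le_specRad_of_mem_spectrum hw

lemma norm_charpoly_coeff_le (A : Matrix (Fin d) (Fin d) ℂ) (e : ℕ) :
    ‖A.charpoly.coeff e‖ ≤ specRad A ^ (d - e) * d.choose e := by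
  have hroots (z : ℂ) (hz : z ∈ (A.charpoly.map (RingHom.id ℂ)).roots) : ‖z‖ ≤ specRad A := by
    rw [Polynomial.map_id] at hz
    exact norm_le_specRad_of_mem_spectrum
      (mem_spectrum_iff_isRoot_charpoly.mpr (Polynomial.isRoot_of_mem_roots hz))
  simpa only [Polynomial.map_id, charpoly_natDegree_eq_dim, Fintype.card_fin] using
    Polynomial.coeff_le_of_roots_le e A.charpoly_monic (IsAlgClosed.splits _) hroots

lemma norm_charpoly_coeff_le_two_pow_mul {δ : ℝ} (hA : specRad A ≤ δ) (hδ : δ ≤ 1) {e : ℕ}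
    (he : e < d) : ‖A.charpoly.coeff e‖ ≤ 2 ^ d * δ := by
  have hδ0 : 0 ≤ δ := specRad_nonneg.trans hA
  calc ‖A.charpoly.coeff e‖ ≤ specRad A ^ (d - e) * d.choose e := norm_charpoly_coeff_le A e
    _ ≤ δ ^ (d - e) * 2 ^ d := by
      gcongr
      · exact specRad_nonneg
      · exact_mod_cast Nat.choose_le_two_pow d e
    _ ≤ δ * 2 ^ d := by gcongr; exact pow_le_of_le_one hδ0 hδ (Nat.sub_pos_of_lt he).ne'
    _ = 2 ^ d * δ := mul_comm _ _

lemma exists_norm_windowProd_le_rpow (d : ℕ) :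
    ∃ N > 0, ∃ C ≥ (1 : ℝ), ∃ α > (0 : ℝ), ∀ A : ℕ → Matrix (Fin d) (Fin d) ℂ,
      (∀ k, ‖A k‖ ≤ 1) → ∀ δ ≤ 1, (∀ i n, specRad (windowProd A i (n + 1)) ≤ δ) →
      ‖windowProd A 0 N‖ ≤ C * δ ^ α := by
  obtain ⟨N, hN, p, hp, C, hC⟩ := exists_norm_windowProd_apply_pow_le (Fin d)
  have hp0 : 0 < (p : ℝ) := by positivity
  let D := |C| * 2 ^ d
  refine ⟨N, hN, max (d * D ^ (p : ℝ)⁻¹) 1, le_max_right _ _, (p : ℝ)⁻¹, inv_pos.mpr hp0,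
    fun A hA δ hδ hrad => ?_⟩
  have hδ0 : 0 ≤ δ := specRad_nonneg.trans (hrad 0 0)
  have hentry (a b : Fin d) : ‖windowProd A 0 N a b‖ ≤ D ^ (p : ℝ)⁻¹ * δ ^ (p : ℝ)⁻¹ := by
    rw [← Real.mul_rpow (by positivity) hδ0,
      Real.le_rpow_inv_iff_of_pos (norm_nonneg _) (by positivity) hp0, Real.rpow_natCast]
    calc ‖windowProd A 0 N a b‖ ^ p ≤ C * (2 ^ d * δ) :=
          hC A (fun k a b => (norm_apply_le_linfty_opNorm _ a b).trans (hA k)) _ (by positivity)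
            (fun i n e he => norm_charpoly_coeff_le_two_pow_mul (hrad i n) hδ
              (he.trans_eq (Fintype.card_fin d))) a b
      _ ≤ |C| * (2 ^ d * δ) := by gcongr; exact le_abs_self C
      _ = D * δ := (mul_assoc _ _ _).symm
  calc ‖windowProd A 0 N‖ ≤ d * (D ^ (p : ℝ)⁻¹ * δ ^ (p : ℝ)⁻¹) := by
        simpa using linfty_opNorm_le_card_mul _ (by positivity) hentry
    _ = d * D ^ (p : ℝ)⁻¹ * δ ^ (p : ℝ)⁻¹ := (mul_assoc _ _ _).symm
    _ ≤ max (d * D ^ (p : ℝ)⁻¹) 1 * δ ^ (p : ℝ)⁻¹ := by gcongr; exact le_max_left _ _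

lemma exists_norm_windowProd_le_rpow_mul_pow (d : ℕ) :
    ∃ N > 0, ∃ C ≥ (1 : ℝ), ∃ α > (0 : ℝ), ∀ A : ℕ → Matrix (Fin d) (Fin d) ℂ,
      ∀ r ≥ 1, (∀ k, ‖A k‖ ≤ r) → ∀ δ ≤ 1, (∀ i n, specRad (windowProd A i (n + 1)) ≤ δ) →
      ‖windowProd A 0 N‖ ≤ C * δ ^ α * r ^ N := by
  obtain ⟨N, hN, C, hC, α, hα, hle⟩ := exists_norm_windowProd_le_rpow d
  refine ⟨N, hN, C, hC, α, hα, fun A r hr hA δ hδ hrad => ?_⟩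
  have hr0 : 0 < r := zero_lt_one.trans_le hr
  let c : ℂ := (r⁻¹ : ℝ)
  have hc : ‖c‖ = r⁻¹ := by simp [c, abs_of_pos hr0]
  have hnorm (k : ℕ) : ‖c • A k‖ ≤ 1 := by
    rw [norm_smul, hc, inv_mul_le_one₀ hr0]
    exact hA k
  have hspec (i n : ℕ) : specRad (windowProd (fun k => c • A k) i (n + 1)) ≤ δ := by
    rw [windowProd_smul]
    calc specRad (c ^ (n + 1) • windowProd A i (n + 1))
      _ ≤ ‖c ^ (n + 1)‖ * specRad (windowProd A i (n + 1)) := specRad_smul_le _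
      _ ≤ specRad (windowProd A i (n + 1)) := by
        refine mul_le_of_le_one_left specRad_nonneg ?_
        rw [norm_pow, hc]
        exact pow_le_one₀ (inv_nonneg.mpr hr0.le) (inv_le_one_of_one_le₀ hr)
      _ ≤ δ := hrad i n
  have := hle _ hnorm δ hδ hspec
  rwa [windowProd_smul, norm_smul, norm_pow, hc, inv_pow, inv_mul_le_iff₀' (by positivity)] at this

end SpectralRadius

section Iteration

lemma mul_pow_mul_le_pow {C q s : ℝ} {m n : ℕ} (hC : 1 ≤ C) (hq : 0 ≤ q) (h : C * q ^ m ≤ s)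
    (hn : n ≠ 0) : C * q ^ (n * m) ≤ s ^ n :=
  calc C * q ^ (n * m) ≤ C ^ n * (q ^ m) ^ n := by
        rw [mul_comm n, pow_mul]
        gcongr
        exact le_self_pow₀ hC hn
    _ = (C * q ^ m) ^ n := (mul_pow _ _ _).symm
    _ ≤ s ^ n := by gcongr

-- Along `m = N ^ k * m₀`, the estimate improves the root `a m ^ (1 / m)` by a factor
-- `2 ^ (-1 / m₀)` at each step.
lemma exists_lt_one_of_growth {a : ℕ → ℝ} {C q : ℝ} {N : ℕ} (hN : 0 < N) (hC : 1 ≤ C)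
    (hq0 : 0 ≤ q) (hq1 : q < 1)
    (h : ∀ᶠ m in atTop, 1 ≤ a m → a (N * m) ≤ C * q ^ m * a m ^ N) : ∃ m > 0, a m < 1 := by
  by_contra! hge
  have hsmall : ∀ᶠ m in atTop, C * q ^ m < (1 / 2) ^ N := by
    have := (tendsto_pow_atTop_nhds_zero_of_lt_one hq0 hq1).const_mul C
    exact this.eventually_lt_const (by simp)
  obtain ⟨M, hM⟩ := eventually_atTop.mp h
  obtain ⟨m₀, hm₀, hMm₀, hm₀_pos⟩ :=
    (hsmall.and ((eventually_ge_atTop M).and (eventually_gt_atTop 0))).exists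
  have hpos (k : ℕ) : 0 < N ^ k := pow_pos hN k
  have hbound (k : ℕ) : a (N ^ k * m₀) ≤ (a m₀ * (1 / 2) ^ k) ^ N ^ k := by
    induction k with
    | zero => simp
    | succ k ih =>
      have hfactor : C * q ^ (N ^ k * m₀) ≤ ((1 / 2) ^ N) ^ N ^ k :=
        mul_pow_mul_le_pow hC hq0 hm₀.le (hpos k).ne'
      have hone : 1 ≤ a (N ^ k * m₀) := hge _ (Nat.mul_pos (hpos k) hm₀_pos)
      calc a (N ^ (k + 1) * m₀) = a (N * (N ^ k * m₀)) := by rw [pow_succ', mul_assoc]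
        _ ≤ C * q ^ (N ^ k * m₀) * a (N ^ k * m₀) ^ N :=
            hM _ (hMm₀.trans (Nat.le_mul_of_pos_left _ (hpos k))) hone
        _ ≤ ((1 / 2) ^ N) ^ N ^ k * ((a m₀ * (1 / 2) ^ k) ^ N ^ k) ^ N := by gcongr
        _ = (a m₀ * (1 / 2) ^ (k + 1)) ^ N ^ (k + 1) := by ring
  have hlim : Tendsto (fun k => a m₀ * (1 / 2) ^ k) atTop (𝓝 0) := by
    simpa using (tendsto_pow_atTop_nhds_zero_of_lt_one (r := (1 / 2 : ℝ)) (by norm_num)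
      (by norm_num)).const_mul (a m₀)
  obtain ⟨k, hk⟩ := (hlim.eventually_lt_const zero_lt_one).exists
  have hm₀_one : 1 ≤ a m₀ := hge m₀ hm₀_pos
  exact (hge _ (Nat.mul_pos (hpos k) hm₀_pos)).not_gt <|
    (hbound k).trans_lt (pow_lt_one₀ (by positivity) hk (hpos k).ne')

end Iteration

section Switching

open scoped Matrix.Norms.Operator

variable {d : ℕ} {I : Type*} {S : I → Matrix (Fin d) (Fin d) ℂ} {Λ : Set (ℕ → I)}

lemma prodS_shift (S : I → Matrix (Fin d) (Fin d) ℂ) (x : ℕ → I) (i n : ℕ) :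
    prodS S (fun k => x (i + k)) n = windowProd (fun k => S (x k)) i n := by
  induction n with
  | zero => rfl
  | succ n ih => rw [prodS, windowProd, ih]

lemma prodS_eq_windowProd (S : I → Matrix (Fin d) (Fin d) ℂ) (x : ℕ → I) (n : ℕ) :
    prodS S x n = windowProd (fun k => S (x k)) 0 n := by
  simpa only [zero_add] using prodS_shift S x 0 n

lemma prodS_add (S : I → Matrix (Fin d) (Fin d) ℂ) (x : ℕ → I) (m n : ℕ) :
    prodS S x (m + n) = prodS S (fun k => x (m + k)) n * prodS S x m := by
  simp only [prodS_shift, prodS_eq_windowProd S x, windowProd_add, zero_add]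

lemma continuous_prodS [TopologicalSpace I] (hS : Continuous S) (n : ℕ) :
    Continuous fun x : ℕ → I => prodS S x n := by
  induction n with
  | zero => exact continuous_const
  | succ n ih => exact (hS.comp (continuous_apply n)).mul ih

lemma ShiftInv.shift_mem (hΛ : ShiftInv Λ) {x : ℕ → I} (hx : x ∈ Λ) (i : ℕ) :
    (fun k => x (i + k)) ∈ Λ := by
  induction i with
  | zero => simpa only [zero_add] using hx
  | succ i ih => simpa only [add_assoc, add_comm 1] using hΛ _ ih

/-- Uniform exponential stability: all products along signals in `Λ` decay at a common exponential
rate. The norm is the one induced by the sup norm on `ℂ^d`; any other gives the same notion. -/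
def UniformExpStable (S : I → Matrix (Fin d) (Fin d) ℂ) (Λ : Set (ℕ → I)) : Prop :=
  ∃ C q : ℝ, 0 ≤ q ∧ q < 1 ∧ ∀ x ∈ Λ, ∀ n, ‖prodS S x n‖ ≤ C * q ^ n

lemma UniformExpStable.tendsto_prodS (h : UniformExpStable S Λ) {x : ℕ → I} (hx : x ∈ Λ) :
    Tendsto (prodS S x) atTop (𝓝 0) := by
  obtain ⟨C, q, hq0, hq1, hle⟩ := h
  refine squeeze_zero_norm (hle x hx) ?_
  simpa only [mul_zero] using (tendsto_pow_atTop_nhds_zero_of_lt_one hq0 hq1).const_mul C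

lemma exists_norm_prodS_le_pow [TopologicalSpace I] (hS : Continuous S) (hΛ : IsCompact Λ)
    (hinv : ShiftInv Λ) : ∃ K ≥ (1 : ℝ), ∀ x ∈ Λ, ∀ n, ‖prodS S x n‖ ≤ K ^ n := by
  obtain ⟨K, hK⟩ := hΛ.exists_bound_of_continuousOn (f := fun x : ℕ → I => S (x 0))
    (hS.comp (continuous_apply 0)).continuousOn
  refine ⟨max K 1, le_max_right _ _, fun x hx n => ?_⟩
  induction n with
  | zero => simpa [prodS] using linfty_opNorm_one_le
  | succ n ih =>
    rw [prodS, pow_succ']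
    exact norm_mul_le_of_le ((hK _ (hinv.shift_mem hx n)).trans (le_max_left _ _)) ih

-- Cut the signal greedily into blocks of length at most `N` along which the norm is at most `c`.
lemma uniformExpStable_of_forall_exists_norm_le (hinv : ShiftInv Λ) {K : ℝ} (hK : 1 ≤ K)
    (hle : ∀ x ∈ Λ, ∀ n, ‖prodS S x n‖ ≤ K ^ n) {N : ℕ} {c : ℝ} (hc0 : 0 < c) (hc1 : c < 1)
    (h : ∀ x ∈ Λ, ∃ k > 0, k ≤ N ∧ ‖prodS S x k‖ ≤ c) : UniformExpStable S Λ := by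
  let q := c ^ ((N + 1 : ℕ) : ℝ)⁻¹
  have hq0 : 0 < q := Real.rpow_pos_of_pos hc0 _
  have hq1 : q < 1 := Real.rpow_lt_one hc0.le hc1 (by positivity)
  have hcq {k : ℕ} (hk : k ≤ N) : c ≤ q ^ k :=
    calc c = q ^ (N + 1) := (Real.rpow_inv_natCast_pow hc0.le N.succ_ne_zero).symm
      _ ≤ q ^ k := pow_le_pow_of_le_one hq0.le hq1.le (hk.trans N.le_succ)
  refine ⟨K ^ N / q ^ N, q, hq0.le, hq1, fun x hx n => ?_⟩
  induction n using Nat.strong_induction_on generalizing x with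
  | _ n ih =>
    rcases lt_or_ge n N with hn | hn
    · calc ‖prodS S x n‖ ≤ K ^ n := hle x hx n
        _ ≤ K ^ N := pow_le_pow_right₀ hK hn.le
        _ = K ^ N / q ^ N * q ^ N := (div_mul_cancel₀ _ (by positivity)).symm
        _ ≤ K ^ N / q ^ N * q ^ n := by
          gcongr ?_ * ?_
          exact pow_le_pow_of_le_one hq0.le hq1.le hn.le
    · obtain ⟨k, hk0, hkN, hk⟩ := h x hx
      obtain ⟨l, rfl⟩ := Nat.exists_eq_add_of_le (hkN.trans hn)
      calc ‖prodS S x (k + l)‖ ≤ K ^ N / q ^ N * q ^ l * q ^ k := by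
            rw [prodS_add]
            exact norm_mul_le_of_le (ih l (by lia) _ (hinv.shift_mem hx k)) (hk.trans (hcq hkN))
        _ = K ^ N / q ^ N * q ^ (k + l) := by ring

lemma uniformExpStable_of_forall_tendsto [TopologicalSpace I] (hS : Continuous S)
    (hΛ : IsCompact Λ) (hinv : ShiftInv Λ) (h : ∀ x ∈ Λ, Tendsto (prodS S x) atTop (𝓝 0)) :
    UniformExpStable S Λ := by
  let U (k : ℕ) : Set (ℕ → I) := {x | 0 < k ∧ ‖prodS S x k‖ < 1 / 2}
  have hopen (k : ℕ) : IsOpen (U k) :=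
    isOpen_const.and (isOpen_lt (continuous_prodS hS k).norm continuous_const)
  have hcover : Λ ⊆ ⋃ k, U k := fun x hx => by
    obtain ⟨k, hk⟩ := ((eventually_gt_atTop 0).and <|
      (h x hx).norm.eventually_lt_const (by simp : ‖(0 : Matrix (Fin d) (Fin d) ℂ)‖ < 1 / 2)).exists
    exact Set.mem_iUnion.mpr ⟨k, hk⟩
  obtain ⟨t, ht⟩ := hΛ.elim_finite_subcover U hopen hcover
  obtain ⟨K, hK, hle⟩ := exists_norm_prodS_le_pow hS hΛ hinv
  refine uniformExpStable_of_forall_exists_norm_le hinv hK hle (N := t.sup id) (c := 1 / 2)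
    (by norm_num) (by norm_num) fun x hx => ?_
  obtain ⟨k, hkt, hk0, hk⟩ := Set.mem_iUnion₂.mp (ht hx)
  exact ⟨k, hk0, Finset.le_sup (f := id) hkt, hk.le⟩

lemma UniformExpStable.gsr_lt_one (hne : Λ.Nonempty) (h : UniformExpStable S Λ) : gsr S Λ < 1 := by
  obtain ⟨C, q, hq0, hq1, hle⟩ := h
  obtain ⟨s, hqs, hs1⟩ := exists_between hq1
  have hs0 : 0 < s := hq0.trans_lt hqs
  have := hne.to_subtype
  have hgeom : ∀ᶠ n in atTop, C * q ^ n ≤ s ^ n := by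
    have hlim := (tendsto_pow_atTop_nhds_zero_of_lt_one (div_nonneg hq0 hs0.le)
      ((div_lt_one hs0).mpr hqs)).const_mul C
    rw [mul_zero] at hlim
    filter_upwards [hlim.eventually_le_const zero_lt_one] with n hn
    rwa [div_pow, ← mul_div_assoc, div_le_one (pow_pos hs0 n)] at hn
  refine (limsup_le_of_le (isCoboundedUnder_le_of_le atTop (x := 0) fun n =>
    Real.iSup_nonneg fun x => Real.rpow_nonneg specRad_nonneg _) ?_).trans_lt hs1
  filter_upwards [hgeom, eventually_gt_atTop 0] with n hn hn0
  refine ciSup_le fun x => ?_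
  rw [one_div, Real.rpow_inv_le_iff_of_pos specRad_nonneg hs0.le (by positivity),
    Real.rpow_natCast]
  exact (specRad_le_norm _).trans ((hle x x.2 n).trans hn)

lemma exists_specRad_prodS_le_pow {K : ℝ} (hK : 1 ≤ K) (hle : ∀ x ∈ Λ, ∀ n, ‖prodS S x n‖ ≤ K ^ n)
    (hne : Λ.Nonempty) (h : gsr S Λ < 1) : ∃ γ : ℝ, 0 < γ ∧ γ < 1 ∧
      ∀ᶠ n in atTop, ∀ x ∈ Λ, specRad (prodS S x n) ≤ γ ^ n := by
  have := hne.to_subtype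
  obtain ⟨γ, hγ, hγ1⟩ := exists_between (max_lt h zero_lt_one)
  obtain ⟨hgsr, hγ0⟩ := max_lt_iff.mp hγ
  let root (n : ℕ) (x : Λ) : ℝ := specRad (prodS S x n) ^ (1 / (n : ℝ))
  have hroot {n : ℕ} (hn : 0 < n) (x : Λ) : root n x ≤ K := by
    simp only [root]
    rw [one_div, Real.rpow_inv_le_iff_of_pos specRad_nonneg (by positivity) (by positivity),
      Real.rpow_natCast]
    exact (specRad_le_norm _).trans (hle x x.2 n)
  have hbdd : IsBoundedUnder (· ≤ ·) atTop fun n => ⨆ x, root n x :=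
    isBoundedUnder_of_eventually_le (a := K) <|
      (eventually_gt_atTop 0).mono fun n hn => ciSup_le (hroot hn)
  refine ⟨γ, hγ0, hγ1, ?_⟩
  filter_upwards [eventually_lt_of_limsup_lt hgsr hbdd, eventually_gt_atTop 0] with n hn hn0 x hx
  have hle_iSup : root n ⟨x, hx⟩ ≤ ⨆ x, root n x :=
    le_ciSup ⟨K, Set.forall_mem_range.mpr (hroot hn0)⟩ _
  rw [← Real.rpow_natCast, ← Real.rpow_inv_le_iff_of_pos specRad_nonneg hγ0.le (by positivity),
    ← one_div]
  exact hle_iSup.trans hn.le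

/-- The largest norm of the products of length `n` along signals in `Λ`, whose exponential growth
rate is the joint spectral radius of `S` on `Λ`. -/
noncomputable def growth (S : I → Matrix (Fin d) (Fin d) ℂ) (Λ : Set (ℕ → I)) (n : ℕ) : ℝ :=
  ⨆ x : Λ, ‖prodS S x n‖

lemma norm_prodS_le_growth [TopologicalSpace I] (hS : Continuous S) (hΛ : IsCompact Λ)
    {x : ℕ → I} (hx : x ∈ Λ) (n : ℕ) : ‖prodS S x n‖ ≤ growth S Λ n := by
  have hbdd : BddAbove ((fun x => ‖prodS S x n‖) '' Λ) :=
    hΛ.bddAbove_image (continuous_prodS hS n).norm.continuousOn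
  rw [Set.image_eq_range] at hbdd
  exact le_ciSup hbdd ⟨x, hx⟩

lemma exists_growth_mul_le [TopologicalSpace I] (hS : Continuous S) (hΛ : IsCompact Λ)
    (hne : Λ.Nonempty) (hinv : ShiftInv Λ) {γ : ℝ} (hγ0 : 0 < γ) (hγ1 : γ < 1)
    (hrad : ∀ᶠ n in atTop, ∀ x ∈ Λ, specRad (prodS S x n) ≤ γ ^ n) :
    ∃ N > 0, ∃ C ≥ (1 : ℝ), ∃ q : ℝ, 0 ≤ q ∧ q < 1 ∧ ∀ᶠ m in atTop,
      1 ≤ growth S Λ m → growth S Λ (N * m) ≤ C * q ^ m * growth S Λ m ^ N := by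
  have := hne.to_subtype
  obtain ⟨N, hN, C, hC, α, hα, hle⟩ := exists_norm_windowProd_le_rpow_mul_pow d
  obtain ⟨M, hM⟩ := eventually_atTop.mp hrad
  refine ⟨N, hN, C, hC, γ ^ α, by positivity, Real.rpow_lt_one hγ0.le hγ1 hα, ?_⟩
  filter_upwards [eventually_ge_atTop M] with m hm hone
  refine ciSup_le fun ⟨x, hx⟩ => ?_
  let block (k : ℕ) := windowProd (fun j => S (x j)) (k * m) m
  have hblock (i n : ℕ) : windowProd block i n = prodS S (fun j => x (i * m + j)) (n * m) := by
    rw [windowProd_windowProd, prodS_shift]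
  have hnorm (k : ℕ) : ‖block k‖ ≤ growth S Λ m :=
    (congrArg norm (prodS_shift S x (k * m) m)).ge.trans
      (norm_prodS_le_growth hS hΛ (hinv.shift_mem hx _) m)
  have hspec (i n : ℕ) : specRad (windowProd block i (n + 1)) ≤ γ ^ m := by
    have hmn : m ≤ (n + 1) * m := Nat.le_mul_of_pos_left m n.succ_pos
    rw [hblock]
    exact (hM _ (hm.trans hmn) _ (hinv.shift_mem hx _)).trans
      (pow_le_pow_of_le_one hγ0.le hγ1.le hmn)
  calc ‖prodS S x (N * m)‖ = ‖windowProd block 0 N‖ := by simp only [hblock, zero_mul, zero_add]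
    _ ≤ C * (γ ^ m) ^ α * growth S Λ m ^ N :=
      hle block _ hone hnorm _ (pow_le_one₀ hγ0.le hγ1.le) hspec
    _ = C * (γ ^ α) ^ m * growth S Λ m ^ N := by rw [Real.rpow_pow_comm hγ0.le]

lemma uniformExpStable_of_gsr_lt_one [TopologicalSpace I] (hS : Continuous S) (hΛ : IsCompact Λ)
    (hne : Λ.Nonempty) (hinv : ShiftInv Λ) (h : gsr S Λ < 1) : UniformExpStable S Λ := by
  obtain ⟨K, hK, hle⟩ := exists_norm_prodS_le_pow hS hΛ hinv
  obtain ⟨γ, hγ0, hγ1, hrad⟩ := exists_specRad_prodS_le_pow hK hle hne h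
  obtain ⟨N, hN, C, hC, q, hq0, hq1, hgrowth⟩ := exists_growth_mul_le hS hΛ hne hinv hγ0 hγ1 hrad
  obtain ⟨m, hm, hlt⟩ := exists_lt_one_of_growth hN hC hq0 hq1 hgrowth
  obtain ⟨c, hc, hc1⟩ := exists_between (max_lt hlt zero_lt_one)
  obtain ⟨hmc, hc0⟩ := max_lt_iff.mp hc
  exact uniformExpStable_of_forall_exists_norm_le hinv hK hle hc0 hc1 fun x hx =>
    ⟨m, hm, le_rfl, (norm_prodS_le_growth hS hΛ hx m).trans hmc.le⟩

end Switching

theorem abs_asymp_stable_iff_gsr_lt_one_general {d : ℕ} {I : Type*} [TopologicalSpace I]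
    (S : I → Matrix (Fin d) (Fin d) ℂ) (hS : Continuous S)
    (Λ : Set (ℕ → I)) (hne : Λ.Nonempty) (hcomp : IsCompact Λ) (hinv : ShiftInv Λ) :
    (∀ x ∈ Λ, Tendsto (prodS S x) atTop (𝓝 0)) ↔ gsr S Λ < 1 :=
  ⟨fun h => (uniformExpStable_of_forall_tendsto hS hcomp hinv h).gsr_lt_one hne,
    fun h _ hx => (uniformExpStable_of_gsr_lt_one hS hcomp hne hinv h).tendsto_prodS hx⟩

/-- `Λ`-absolute asymptotic stability is equivalent to `ρ(S|Λ) < 1`. -/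
theorem abs_asymp_stable_iff_gsr_lt_one {d : ℕ} (hd : 1 ≤ d) {I : Type*} [MetricSpace I]
    (S : I → Matrix (Fin d) (Fin d) ℂ) (hS : Continuous S)
    (Λ : Set (ℕ → I)) (hne : Λ.Nonempty) (hcomp : IsCompact Λ) (hinv : ShiftInv Λ) :
    (∀ x ∈ Λ, Filter.Tendsto (fun n : ℕ => prodS S x n) Filter.atTop (nhds 0)) ↔
      gsr S Λ < 1 :=
  abs_asymp_stable_iff_gsr_lt_one_general S hS Λ hne hcomp hinv
end
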